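/- There exists a 4-dimensional 2-uniform subspace of the 7-partite space C^2 ⊗ (C^3)^{⊗6}, i.e., a 4-dimensional linear subspace every unit vector of which has all its reductions to any 2 of the 7 parties maximally mixed. -/

import Mathlib

/-!
Common definitions: multipartite systems with parties indexed by a finite type `ι`,
local dimensions `d : ι → ℕ`, vectors as functions on the configuration space,
partial traces, and `r`-uniform states and subspaces.
-/

open scoped ComplexConjugate Matrix

namespace RUnif

variable {ι : Type} [Fintype ι] [DecidableEq ι]

/-- Configuration space (computational basis index set) of the multipartite system
`ℂ^{d i₁} ⊗ ... ⊗ ℂ^{d iₙ}`. -/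
abbrev Cfg (d : ι → ℕ) : Type := ∀ i, Fin (d i)

/-- The multipartite Hilbert space `ℂ^{d i₁} ⊗ ... ⊗ ℂ^{d iₙ}`, realized as functions
on the configuration space. -/
abbrev H (d : ι → ℕ) : Type := Cfg d → ℂ

/-- The standard hermitian inner product `⟪φ, ψ⟫`. -/
noncomputable def dotc (d : ι → ℕ) (φ ψ : H d) : ℂ :=
  ∑ x, conj (φ x) * ψ x

/-- The rank-one operator `|ψ⟩⟨φ|` as a matrix. -/
noncomputable def dyad (d : ι → ℕ) (ψ φ : H d) : Matrix (Cfg d) (Cfg d) ℂ :=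
  Matrix.of fun x y => ψ x * conj (φ y)

/-- Configurations of the parties inside `S`. -/
abbrev SubCfg (d : ι → ℕ) (S : Finset ι) : Type := ∀ i : S, Fin (d i.1)

/-- Configurations of the parties outside `S`. -/
abbrev CoCfg (d : ι → ℕ) (S : Finset ι) : Type := ∀ i : {j : ι // j ∉ S}, Fin (d i.1)

/-- Merge a configuration of the parties in `S` with one of the parties outside `S`. -/
def merge (d : ι → ℕ) (S : Finset ι) (a : SubCfg d S) (c : CoCfg d S) : Cfg d :=
  fun i => if h : i ∈ S then a ⟨i, h⟩ else c ⟨i, h⟩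

/-- Partial trace over the parties *outside* `S` (i.e. `Tr_{Sᶜ}`), leaving an operator
on the parties in `S`. -/
noncomputable def ptr (d : ι → ℕ) (S : Finset ι) (M : Matrix (Cfg d) (Cfg d) ℂ) :
    Matrix (SubCfg d S) (SubCfg d S) ℂ :=
  Matrix.of fun a b => ∑ c : CoCfg d S, M (merge d S a c) (merge d S b c)

/-- The maximally mixed state `(1/d_S) I_S` on the parties in `S`. -/
noncomputable def unifMix (d : ι → ℕ) (S : Finset ι) :
    Matrix (SubCfg d S) (SubCfg d S) ℂ :=
  (∏ i : S, (d i.1 : ℂ))⁻¹ • 1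

/-- `ψ` is a unit vector. -/
def IsUnitVec (d : ι → ℕ) (ψ : H d) : Prop := dotc d ψ ψ = 1

/-- `ψ` is `r`-uniform: every reduction to `r` parties is maximally mixed. -/
def IsUniform (d : ι → ℕ) (r : ℕ) (ψ : H d) : Prop :=
  ∀ S : Finset ι, S.card = r → ptr d S (dyad d ψ ψ) = unifMix d S

/-- A subspace is `r`-uniform if every unit vector in it is an `r`-uniform state. -/
def IsUniformSubspace (d : ι → ℕ) (r : ℕ) (W : Submodule ℂ (H d)) : Prop :=
  ∀ ψ ∈ W, IsUnitVec d ψ → IsUniform d r ψ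

end RUnif

namespace RUnif

/-- Adjacency matrix (over `ZMod 3`) of the graph code; row and column `0` (the qubit) vanish. -/
def adjA : Fin 7 → Fin 7 → ZMod 3 :=
  ![![0, 0, 0, 0, 0, 0, 0],
    ![0, 0, 0, 2, 2, 2, 1],
    ![0, 0, 0, 1, 1, 1, 1],
    ![0, 2, 1, 0, 1, 2, 0],
    ![0, 2, 1, 1, 0, 0, 2],
    ![0, 2, 1, 2, 0, 0, 1],
    ![0, 1, 1, 0, 2, 1, 0]]

def inB : Fin 7 → ZMod 3 := ![0, 1, 0, 2, 0, 1, 1]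
def inC : Fin 7 → ZMod 3 := ![0, 1, 2, 2, 0, 2, 0]

lemma adjA_symm : ∀ i j, adjA i j = adjA j i := by decide +kernel
lemma adjA_diag : ∀ i, adjA i i = 0 := by decide +kernel
lemma adjA_zero : ∀ i, adjA 0 i = 0 := by decide +kernel

lemma key : ∀ p q : Fin 7, p ≠ 0 → q ≠ 0 → p ≠ q → ∀ u v w z : ZMod 3,
    (∀ j, j ≠ 0 → j ≠ p → j ≠ q → adjA p j * u + adjA q j * v + w * inB j + z * inC j = 0) →
    u = 0 ∧ v = 0 ∧ w = 0 ∧ z = 0 := by decide +kernel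

lemma key2 (S : Finset (Fin 7)) (hS : S.card = 2) (U : Fin 7 → ZMod 3)
    (hU : ∀ i, i ∉ S → U i = 0) (w z : ZMod 3)
    (h : ∀ j, j ≠ 0 → j ∉ S → ∑ i, adjA i j * U i + w * inB j + z * inC j = 0) :
    (∀ i, i ≠ 0 → U i = 0) ∧ w = 0 ∧ z = 0 := by
  obtain ⟨p, q, hpq, rfl⟩ := Finset.card_eq_two.1 hS
  have hsum : ∀ j, ∑ i, adjA i j * U i = adjA p j * U p + adjA q j * U q := by
    intro j
    rw [← Finset.sum_subset (Finset.subset_univ {p, q}), Finset.sum_pair hpq]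
    intro i _ hi
    rw [hU i hi, mul_zero]
  simp only [hsum, Finset.mem_insert, Finset.mem_singleton, not_or] at h hU
  have hex : ∀ r : Fin 7, ∃ s : Fin 7, s ≠ 0 ∧ s ≠ r := by decide
  by_cases hp : p = 0
  · subst hp
    obtain ⟨s, hs0, hsq⟩ := hex q
    obtain ⟨-, h2, h3, h4⟩ := key s q hs0 (Ne.symm hpq) hsq 0 (U q) w z (by
      intro j h0 _ h2
      simpa [adjA_zero] using h j h0 ⟨h0, h2⟩)
    refine ⟨fun i hi => ?_, h3, h4⟩
    by_cases hiq : i = q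
    · rw [hiq, h2]
    · exact hU i ⟨hi, hiq⟩
  by_cases hq : q = 0
  · subst hq
    obtain ⟨s, hs0, hsq⟩ := hex p
    obtain ⟨-, h2, h3, h4⟩ := key s p hs0 hp hsq 0 (U p) w z (by
      intro j h0 _ h2
      simpa [adjA_zero] using h j h0 ⟨h2, h0⟩)
    refine ⟨fun i hi => ?_, h3, h4⟩
    by_cases hiq : i = p
    · rw [hiq, h2]
    · exact hU i ⟨hiq, hi⟩
  obtain ⟨h1, h2, h3, h4⟩ := key p q hp hq hpq (U p) (U q) w z (by
      intro j h0 h1 h2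
      simpa using h j h0 ⟨h1, h2⟩)
  refine ⟨fun i hi => ?_, h3, h4⟩
  by_cases hip : i = p
  · rw [hip, h1]
  by_cases hiq : i = q
  · rw [hiq, h2]
  · exact hU i ⟨hip, hiq⟩

/-- The quadratic-plus-linear exponent. -/
def expo (w z : ZMod 3) (V : Fin 7 → ZMod 3) : ZMod 3 :=
  2 * ∑ i, ∑ j, adjA i j * V i * V j + ∑ j, (w * inB j + z * inC j) * V j

lemma expo_shift (w z : ZMod 3) (V : Fin 7 → ZMod 3) (j : Fin 7) :
    expo w z (V + Pi.single j 1) =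
      expo w z V + (∑ i, adjA i j * V i + w * inB j + z * inC j) := by
  have h4 : (2 : ZMod 3) * 2 = 1 := by decide
  have e1 : ∑ i, adjA j i * V i = ∑ i, adjA i j * V i :=
    Finset.sum_congr rfl fun i _ => by rw [adjA_symm]
  simp only [expo, Pi.add_apply, mul_add, add_mul, Finset.sum_add_distrib, Pi.single_apply,
    mul_ite, mul_one, mul_zero, ite_mul, zero_mul, Finset.sum_ite_eq, Finset.sum_ite_eq',
    Finset.mem_univ, if_true, adjA_diag]
  have e2 : ∀ i, ∑ x, (if i = j then adjA i x * V x else 0) =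
      if i = j then ∑ x, adjA i x * V x else 0 := by
    intro i; split_ifs <;> simp
  simp only [e2, Finset.sum_ite_eq', Finset.mem_univ, if_true, e1, adjA_diag]
  simp
  linear_combination (∑ i, adjA i j * V i) * h4

abbrev dd : Fin 7 → ℕ := ![2, 3, 3, 3, 3, 3, 3]

lemma dd_ne : ∀ j : Fin 7, j ≠ 0 → dd j = 3 := by decide

/-- Values of a configuration in `ZMod 3`. -/
def val3 (x : Cfg dd) : Fin 7 → ZMod 3 := fun i => ((x i : ℕ) : ZMod 3)

/-- The qubit coordinate. -/
def q0 (x : Cfg dd) : Fin 2 := x 0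

def c1 (k : Fin 4) (t : Fin 2) : ZMod 3 := ((2 * (k : ℕ) + t : ℕ) : ZMod 3)
def c2 (k : Fin 4) (t : Fin 2) : ZMod 3 := (((2 * (k : ℕ) + t) / 3 : ℕ) : ZMod 3)

lemma c_inj : ∀ k k' t t', c1 k t - c1 k' t' = 0 → c2 k t - c2 k' t' = 0 → k = k' ∧ t = t' := by
  decide +kernel

def ph (k : Fin 4) (x : Cfg dd) : ZMod 3 := expo (c1 k (q0 x)) (c2 k (q0 x)) (val3 x)

noncomputable def chi : AddChar (ZMod 3) ℂ := ZMod.stdAddChar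

lemma chi_ne {a : ZMod 3} (h : a ≠ 0) : chi a ≠ 1 := by
  intro h1
  apply h
  apply ZMod.injective_stdAddChar (N := 3)
  rw [AddChar.map_zero_eq_one]
  exact h1

lemma finRotate3 : ∀ (n : ℕ), n = 3 → ∀ a : Fin n,
    (((finRotate n a : Fin n) : ℕ) : ZMod 3) = ((a : ℕ) : ZMod 3) + 1 := by
  rintro n rfl
  decide

/-- Shift the coordinate `j` of an outer configuration. -/
def shift (S : Finset (Fin 7)) (j : {j : Fin 7 // j ∉ S}) : Equiv.Perm (CoCfg dd S) where
  toFun c := Function.update c j (finRotate _ (c j))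
  invFun c := Function.update c j ((finRotate _).symm (c j))
  left_inv c := by
    simp only [Function.update_self, Function.update_idem, Equiv.symm_apply_apply,
      Function.update_eq_self]
  right_inv c := by
    simp only [Function.update_self, Function.update_idem, Equiv.apply_symm_apply,
      Function.update_eq_self]

lemma merge_shift (S : Finset (Fin 7)) (j : {j : Fin 7 // j ∉ S}) (a : SubCfg dd S)
    (c : CoCfg dd S) (i : Fin 7) (hi : i ≠ j.1) :
    merge dd S a (shift S j c) i = merge dd S a c i := by
  unfold merge
  split_ifs with h
  · rfl
  · simp only [shift, Equiv.coe_fn_mk]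
    rw [Function.update_of_ne]
    intro h'
    exact hi (congrArg Subtype.val h')

lemma q0_shift (S : Finset (Fin 7)) (j : {j : Fin 7 // j ∉ S}) (hj : j.1 ≠ 0)
    (a : SubCfg dd S) (c : CoCfg dd S) :
    q0 (merge dd S a (shift S j c)) = q0 (merge dd S a c) :=
  merge_shift S j a c 0 (Ne.symm hj)

lemma val3_shift (S : Finset (Fin 7)) (j : {j : Fin 7 // j ∉ S}) (hj : j.1 ≠ 0)
    (a : SubCfg dd S) (c : CoCfg dd S) :
    val3 (merge dd S a (shift S j c)) = val3 (merge dd S a c) + Pi.single j.1 1 := by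
  funext i
  by_cases hi : i = j.1
  · subst hi
    simp only [val3, merge, j.2, dite_false, Pi.add_apply, Pi.single_eq_same]
    simp only [shift, Equiv.coe_fn_mk, Function.update_self]
    exact finRotate3 _ (dd_ne _ hj) _
  · simp only [val3, Pi.add_apply, Pi.single_eq_of_ne hi, add_zero]
    rw [merge_shift S j a c i hi]

lemma ph_shift (S : Finset (Fin 7)) (j : {j : Fin 7 // j ∉ S}) (hj : j.1 ≠ 0)
    (a : SubCfg dd S) (c : CoCfg dd S) (k : Fin 4) :
    ph k (merge dd S a (shift S j c)) = ph k (merge dd S a c) +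
      (∑ i, adjA i j * val3 (merge dd S a c) i + c1 k (q0 (merge dd S a c)) * inB j
        + c2 k (q0 (merge dd S a c)) * inC j) := by
  unfold ph
  rw [val3_shift S j hj, expo_shift, q0_shift S j hj]

/-- Difference of the merged values; depends only on `a`, `b`. -/
def dif (S : Finset (Fin 7)) (a b : SubCfg dd S) (i : Fin 7) : ZMod 3 :=
  if h : i ∈ S then ((a ⟨i, h⟩ : ℕ) : ZMod 3) - ((b ⟨i, h⟩ : ℕ) : ZMod 3) else 0

lemma dif_eq (S : Finset (Fin 7)) (a b : SubCfg dd S) (c : CoCfg dd S) (i : Fin 7) :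
    val3 (merge dd S a c) i - val3 (merge dd S b c) i = dif S a b i := by
  unfold val3 merge dif
  split_ifs with h <;> simp

lemma sum_ind (S : Finset (Fin 7)) (hS : S.card = 2) (a b : SubCfg dd S) (k k' : Fin 4)
    (hne : ¬ (k = k' ∧ a = b)) (t t' : Fin 2) :
    ∑ c : CoCfg dd S, (if q0 (merge dd S a c) = t ∧ q0 (merge dd S b c) = t' then
      chi (ph k (merge dd S a c) - ph k' (merge dd S b c)) else 0) = 0 := by
  by_cases hex : ∃ c : CoCfg dd S, q0 (merge dd S a c) = t ∧ q0 (merge dd S b c) = t'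
  swap
  · push Not at hex
    apply Finset.sum_eq_zero
    intro c _
    rw [if_neg]
    rintro ⟨h1, h2⟩
    exact hex c h1 h2
  obtain ⟨c0, ht, ht'⟩ := hex
  have hj : ∃ j, j ≠ 0 ∧ j ∉ S ∧ ∑ i, adjA i j * dif S a b i + (c1 k t - c1 k' t') * inB j
      + (c2 k t - c2 k' t') * inC j ≠ 0 := by
    by_contra! hcon
    obtain ⟨h1, h2, h3⟩ := key2 S hS (dif S a b) (fun i hi => by simp [dif, hi]) _ _ hcon
    obtain ⟨hk, htt⟩ := c_inj _ _ _ _ h2 h3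
    apply hne
    refine ⟨hk, ?_⟩
    funext ⟨i, hi⟩
    by_cases hi0 : i = 0
    · subst hi0
      have : q0 (merge dd S a c0) = q0 (merge dd S b c0) := by
        rw [ht, ht', htt]
      simpa [q0, merge, hi] using this
    · have h4 := h1 i hi0
      simp only [dif, hi, dite_true] at h4
      have inj : ∀ n, n = 3 → ∀ u v : Fin n,
          ((u : ℕ) : ZMod 3) - ((v : ℕ) : ZMod 3) = 0 → u = v := by
        rintro n rfl
        decide
      exact inj _ (dd_ne i hi0) _ _ h4
  obtain ⟨j, hj0, hjS, hd⟩ := hj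
  set δ := ∑ i, adjA i j * dif S a b i + (c1 k t - c1 k' t') * inB j
      + (c2 k t - c2 k' t') * inC j with hδ
  set F : CoCfg dd S → ℂ := fun c => if q0 (merge dd S a c) = t ∧ q0 (merge dd S b c) = t' then
      chi (ph k (merge dd S a c) - ph k' (merge dd S b c)) else 0 with hF
  have hshift : ∀ c, F (shift S ⟨j, hjS⟩ c) = chi δ * F c := by
    intro c
    simp only [hF]
    rw [q0_shift S ⟨j, hjS⟩ hj0, q0_shift S ⟨j, hjS⟩ hj0]
    split_ifs with h
    · rw [← AddChar.map_add_eq_mul]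
      congr 1
      rw [ph_shift S ⟨j, hjS⟩ hj0, ph_shift S ⟨j, hjS⟩ hj0, h.1, h.2, hδ]
      have : ∑ i, adjA i j * dif S a b i = ∑ i, adjA i j * val3 (merge dd S a c) i -
          ∑ i, adjA i j * val3 (merge dd S b c) i := by
        rw [← Finset.sum_sub_distrib]
        refine Finset.sum_congr rfl fun i _ => ?_
        rw [← dif_eq S a b c]
        ring
      rw [this]
      ring
    · simp
  have hT : ∑ c, F c = chi δ * ∑ c, F c := by
    rw [Finset.mul_sum, ← Equiv.sum_comp (shift S ⟨j, hjS⟩) F]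
    exact Finset.sum_congr rfl fun c _ => hshift c
  have h0 : (1 - chi δ) * ∑ c, F c = 0 := by linear_combination hT
  rcases mul_eq_zero.1 h0 with h | h
  · exact absurd (sub_eq_zero.1 h).symm (chi_ne hd)
  · exact h

lemma sum_chi (S : Finset (Fin 7)) (hS : S.card = 2) (a b : SubCfg dd S) (k k' : Fin 4) :
    ∑ c : CoCfg dd S, chi (ph k (merge dd S a c)) * conj (chi (ph k' (merge dd S b c)))
      = if k = k' ∧ a = b then (Fintype.card (CoCfg dd S) : ℂ) else 0 := by
  have h1 : ∀ c : CoCfg dd S, chi (ph k (merge dd S a c)) * conj (chi (ph k' (merge dd S b c)))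
      = chi (ph k (merge dd S a c) - ph k' (merge dd S b c)) := by
    intro c
    rw [sub_eq_add_neg, AddChar.map_add_eq_mul, AddChar.map_neg_eq_conj]
  simp only [h1]
  split_ifs with h
  · obtain ⟨rfl, rfl⟩ := h
    simp
  · have h2 : ∀ c : CoCfg dd S, chi (ph k (merge dd S a c) - ph k' (merge dd S b c)) =
        ∑ t : Fin 2, ∑ t' : Fin 2, (if q0 (merge dd S a c) = t ∧ q0 (merge dd S b c) = t' then
      chi (ph k (merge dd S a c) - ph k' (merge dd S b c)) else 0) := by
      intro c
      simp only [ite_and]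
      rw [Finset.sum_eq_single (q0 (merge dd S a c)), Finset.sum_eq_single (q0 (merge dd S b c))]
      · simp
      · intro t _ ht
        simp [Ne.symm ht]
      · intro hh
        exact absurd (Finset.mem_univ _) hh
      · intro t _ ht
        simp [Ne.symm ht]
      · intro hh
        exact absurd (Finset.mem_univ _) hh
    rw [Finset.sum_congr rfl fun c _ => h2 c, Finset.sum_comm]
    refine Finset.sum_eq_zero fun t _ => ?_
    rw [Finset.sum_comm]
    exact Finset.sum_eq_zero fun t' _ => sum_ind S hS a b k k' h t t'

/-- The encoding map. -/
noncomputable def enc : (Fin 4 → ℂ) →ₗ[ℂ] H dd where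
  toFun α x := ∑ k, α k * chi (ph k x)
  map_add' α β := by
    funext x
    simp [add_mul, Finset.sum_add_distrib]
  map_smul' r α := by
    funext x
    simp [Finset.mul_sum, mul_assoc]

lemma ptr_enc (S : Finset (Fin 7)) (hS : S.card = 2) (α : Fin 4 → ℂ) :
    ptr dd S (dyad dd (enc α) (enc α)) =
      ((Fintype.card (CoCfg dd S) : ℂ) * ∑ k, α k * conj (α k)) • 1 := by
  ext a b
  have h1 : ptr dd S (dyad dd (enc α) (enc α)) a b = ∑ k, ∑ k', α k * conj (α k') *
      ∑ c : CoCfg dd S, chi (ph k (merge dd S a c)) * conj (chi (ph k' (merge dd S b c))) := by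
    simp only [ptr, dyad, Matrix.of_apply, enc, LinearMap.coe_mk, AddHom.coe_mk, map_sum, map_mul,
      Finset.sum_mul_sum]
    simp only [Finset.mul_sum]
    rw [Finset.sum_comm]
    refine Finset.sum_congr rfl fun k _ => ?_
    rw [Finset.sum_comm]
    refine Finset.sum_congr rfl fun k' _ => ?_
    refine Finset.sum_congr rfl fun c _ => ?_
    ring
  rw [h1]
  simp only [sum_chi S hS, Matrix.smul_apply, Matrix.one_apply, smul_eq_mul]
  by_cases hab : a = b
  · simp [hab, Finset.sum_mul, mul_comm]
  · simp [hab]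

/-- Splitting configurations. -/
def split (S : Finset (Fin 7)) : SubCfg dd S × CoCfg dd S ≃ Cfg dd where
  toFun p := merge dd S p.1 p.2
  invFun x := (fun i => x i.1, fun i => x i.1)
  left_inv p := by
    ext i
    · simp [merge, i.2]
    · simp [merge, i.2]
  right_inv x := by
    funext i
    simp [merge]

lemma trace_ptr (S : Finset (Fin 7)) (ψ : H dd) :
    (ptr dd S (dyad dd ψ ψ)).trace = dotc dd ψ ψ := by
  simp only [Matrix.trace, Matrix.diag, ptr, dyad, Matrix.of_apply, dotc]
  rw [← Equiv.sum_comp (split S), Fintype.sum_prod_type]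
  refine Finset.sum_congr rfl fun a _ => Finset.sum_congr rfl fun c _ => ?_
  simp only [split, Equiv.coe_fn_mk]
  ring

lemma enc_uniform (α : Fin 4 → ℂ) (h : IsUnitVec dd (enc α)) : IsUniform dd 2 (enc α) := by
  intro S hS
  have h1 := trace_ptr S (enc α)
  rw [h, ptr_enc S hS, Matrix.trace_smul, Matrix.trace_one, smul_eq_mul] at h1
  rw [ptr_enc S hS, unifMix]
  congr 1
  have h2 : (Fintype.card (SubCfg dd S) : ℂ) = ∏ i : S, (dd i.1 : ℂ) := by
    simp [Fintype.card_pi]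
  rw [h2] at h1
  exact eq_inv_of_mul_eq_one_left h1

lemma enc_inj : Function.Injective enc := by
  rw [injective_iff_map_eq_zero]
  intro α h
  have h1 := ptr_enc {0, 1} (by decide) α
  rw [h] at h1
  have h2 := congrArg Matrix.trace h1
  rw [trace_ptr, Matrix.trace_smul, Matrix.trace_one, smul_eq_mul] at h2
  have hpos : ∀ i, 0 < dd i := by decide
  have hne1 : Nonempty (SubCfg dd {0, 1}) := ⟨fun i => ⟨0, hpos _⟩⟩
  have hne2 : Nonempty (CoCfg dd {0, 1}) := ⟨fun i => ⟨0, hpos _⟩⟩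
  have h3 : ∑ k, α k * conj (α k) = 0 := by
    simp only [dotc, Pi.zero_apply, mul_zero, Finset.sum_const_zero] at h2
    rcases mul_eq_zero.1 h2.symm with h4 | h4
    · rcases mul_eq_zero.1 h4 with h5 | h5
      · exact absurd h5 (Nat.cast_ne_zero.2 Fintype.card_ne_zero)
      · exact h5
    · exact absurd h4 (Nat.cast_ne_zero.2 Fintype.card_ne_zero)
  simp only [Complex.mul_conj] at h3
  norm_cast at h3
  rw [Finset.sum_eq_zero_iff_of_nonneg fun k _ => Complex.normSq_nonneg _] at h3
  funext k
  exact Complex.normSq_eq_zero.1 (h3 k (Finset.mem_univ k))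

end RUnif

open RUnif in
/-- There exists a 4-dimensional 2-uniform subspace of `ℂ² ⊗ (ℂ³)^{⊗6}`. -/
theorem statement14 :
    ∃ W : Submodule ℂ (H ![2, 3, 3, 3, 3, 3, 3]),
      IsUniformSubspace ![2, 3, 3, 3, 3, 3, 3] 2 W ∧ Module.finrank ℂ W = 4 := by
  refine ⟨LinearMap.range enc, ?_, ?_⟩
  · rintro ψ ⟨α, rfl⟩ h
    exact enc_uniform α h
  · rw [LinearMap.finrank_range_of_inj enc_inj]
    simp
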